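/- arXiv:2109.05806 — 2 statements merged into one kernel-verified Lean document; each statement's English description precedes it below -/
import Mathlib

section
/- Let v ∈ 𝔽ⁿ. Then the Hamming weight of v equals the integer represented in binary by a^{(n)}(v); that is, w(v) = int(a^{(n)}₁(v), …, a^{(n)}_ℓ(v)). -/
/-!
One step of the recursion is a ripple-carry increment: adding the bit `v_i` to the integer with
binary digits `a^{(i-1)}`, the carry into position `j` is `(∏_{h<j} a_h) · v_i`. So
`intval_increment` says that the represented integer grows by `v_i`, up to the carry out of the top
digit, which counts `2^ℓ`. By induction `a^{(i)}` represents the weight of the first `i`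
coordinates: that weight is at most `n < 2^ℓ`, so no carry ever leaves the top digit.
-/

/-- The weight-counter functions `a^{(i)} : 𝔽ⁿ → 𝔽^ℓ`, `ℓ = ⌊log₂ n⌋ + 1`, defined by
`a^{(0)}(v) = 0` and `a^{(i)}_j(v) = a^{(i-1)}_j(v) + (∏_{h<j} a^{(i-1)}_h(v))·v_i`
(indices of `v` are one-based in the paper; here `v_i` is `v ⟨i-1, _⟩`). -/
def acount (n : ℕ) (v : Fin n → ZMod 2) : ℕ → Fin (Nat.log 2 n + 1) → ZMod 2
  | 0 => fun _ => 0
  | i + 1 => fun j =>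
      acount n v i j +
        (∏ h ∈ Finset.Iio j, acount n v i h) * (if h : i < n then v ⟨i, h⟩ else 0)

/-- The Hamming weight of a vector over `𝔽₂`: the number of nonzero coordinates. -/
def hammingWt {m : ℕ} (v : Fin m → ZMod 2) : ℕ :=
  (Finset.univ.filter fun j => v j ≠ 0).card

/-- `int(a) = ∑_j a_j · 2^(j-1)` (one-based), i.e. the integer whose binary expansion,
least significant bit first, is `a`. -/
def intval {l : ℕ} (a : Fin l → ZMod 2) : ℕ :=
  ∑ j, (a j).val * 2 ^ (j : ℕ)

/-- Half adder: the sum bit is `a + c` and the carry bit is `a * c`. -/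
lemma half_adder (a c : ZMod 2) : (a + c).val + 2 * (a * c).val = a.val + c.val := by
  revert a c
  decide

/-- Ripple-carry increment of the digits `a` by a bit `x`; the last digit's outgoing carry is
`(∏ h, a h) * x`. -/
lemma intval_increment (l : ℕ) (a : Fin l → ZMod 2) (x : ZMod 2) :
    intval (fun j => a j + (∏ h ∈ Finset.Iio j, a h) * x) + 2 ^ l * ((∏ h, a h) * x).val
      = intval a + x.val := by
  induction l with
  | zero => simp [intval]
  | succ l ih =>
    have hi := ih (fun j => a j.castSucc)
    have key := half_adder (a (Fin.last l)) ((∏ h : Fin l, a h.castSucc) * x)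
    have hlast : ∏ h ∈ Finset.Iio (Fin.last l), a h = ∏ h : Fin l, a h.castSucc := by
      simp [Fin.Iio_last_eq_map]
    have hcast (j : Fin l) :
        ∏ h ∈ Finset.Iio j.castSucc, a h = ∏ h ∈ Finset.Iio j, a h.castSucc := by
      rw [← Fin.map_castSuccEmb_Iio, Finset.prod_map]
      rfl
    have hprod : (∏ h, a h) * x = a (Fin.last l) * ((∏ h : Fin l, a h.castSucc) * x) := by
      rw [Fin.prod_univ_castSucc]
      ring
    simp only [intval] at hi ⊢
    rw [hprod, Fin.sum_univ_castSucc, Fin.sum_univ_castSucc]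
    simp only [hlast, hcast, Fin.val_castSucc, Fin.val_last]
    rw [pow_succ]
    linear_combination hi + 2 ^ l * key

/-- `a^{(i)}` represents the weight of the first `i` coordinates. -/
lemma intval_acount (n : ℕ) (v : Fin n → ZMod 2) (i : ℕ) (hin : i ≤ n) :
    intval (acount n v i)
      = ∑ k ∈ Finset.range i, (if h : k < n then v ⟨k, h⟩ else 0 : ZMod 2).val := by
  induction i with
  | zero => simp [intval, acount]
  | succ i ih =>
    have hstep := intval_increment _ (acount n v i) (if h : i < n then v ⟨i, h⟩ else 0)
    rw [ih (by omega), ← Finset.sum_range_succ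
      (fun k => (if h : k < n then v ⟨k, h⟩ else 0 : ZMod 2).val)] at hstep
    have hle : ∑ k ∈ Finset.range (i + 1), (if h : k < n then v ⟨k, h⟩ else 0 : ZMod 2).val
        ≤ i + 1 := by
      refine (Finset.sum_le_card_nsmul _ _ 1 fun k _ => ?_).trans (by simp)
      exact Nat.le_of_lt_succ (ZMod.val_lt _)
    have hlt : n < 2 ^ (Nat.log 2 n + 1) := Nat.lt_pow_succ_log_self (by norm_num) n
    -- A nonzero carry out of the top digit would force the partial weight to be at least `2 ^ ℓ`.
    have hcarry : ((∏ h, acount n v i h) * (if h : i < n then v ⟨i, h⟩ else 0)).val = 0 := by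
      by_contra hne
      have := Nat.le_mul_of_pos_right (2 ^ (Nat.log 2 n + 1)) (Nat.pos_of_ne_zero hne)
      omega
    rw [hcarry, mul_zero, add_zero] at hstep
    exact hstep

/-- (Paper's Corollary.)  For `v ∈ 𝔽ⁿ`, the Hamming weight of `v`
equals the integer represented in binary by `a^{(n)}(v)`. -/
theorem hammingWt_eq_intval_acount (n : ℕ) (hn : 1 ≤ n) (v : Fin n → ZMod 2) :
    hammingWt v = intval (acount n v n) := by
  have hbit : ∀ x : ZMod 2, (if x ≠ 0 then 1 else 0) = x.val := by decide
  rw [intval_acount n v n le_rfl, Finset.sum_range, hammingWt, Finset.card_filter]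
  simp [← hbit]
end

section
/- Fix q ≥ 1 and let W̃ = {ṽ ∈ 𝔽^{10q} : each of the q consecutive length-10 blocks of ṽ lies in Σ̂ = ε̂ + Ĉ, and w(ṽ) ≤ 3q}. Then the image of W̃ under the blockwise truncation τ : 𝔽^{10q} → 𝔽^{3q} equals the variety {w ∈ 𝔽^{3q} : w_{3(i-1)+1}·w_{3(i-1)+2} + w_{3(i-1)+3} = 0 for every i = 1,…,q}, i.e. the set of common zeroes of the q pairwise variable-disjoint quadratic equations x y + z = 0. -/
/-!
The word of `SigmaHat` with message `(a, b, c)` starts with `a, b, c` (the generator matrix is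
systematic in its first three columns) and has Hamming weight
`[a] + [b] + [c] + 2[a + c] + 2[b + c] + 3[1 + a + b + c]`. Running through the eight messages,
this weight is at least `3`, with equality exactly when `a * b + c = 0` (`three_le_wt_codeword`,
`wt_codeword_le_three_iff`).

The weight of a vector of length `10 q` is the sum of the weights of its blocks
(`hammingWt_eq_sum_block`). Hence a vector with all blocks in `SigmaHat` has weight at least `3 q`,
and the bound `3 q` forces every block to have weight exactly `3`, that is, to satisfy its
quadratic equation. Conversely, a point of the variety is the truncation of the vector whose
blocks are the codewords with messages the consecutive triples of the point.
-/

/-- First row of the generator matrix `Ĝ`. -/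
def g1 : Fin 10 → ZMod 2 := ![1,0,0,1,1,0,0,1,1,1]

/-- Second row of the generator matrix `Ĝ`. -/
def g2 : Fin 10 → ZMod 2 := ![0,1,0,0,0,1,1,1,1,1]

/-- Third row of the generator matrix `Ĝ`. -/
def g3 : Fin 10 → ZMod 2 := ![0,0,1,1,1,1,1,1,1,1]

/-- The `[10,3]` binary linear code `Ĉ` spanned by the three rows of `Ĝ`. -/
def Chat : Set (Fin 10 → ZMod 2) :=
  {x | ∃ a b c : ZMod 2, x = a • g1 + b • g2 + c • g3}

/-- The coset representative `ε̂ = (0,0,0,0,0,0,0,1,1,1)`. -/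
def epsHat : Fin 10 → ZMod 2 := ![0,0,0,0,0,0,0,1,1,1]

/-- The coset `Σ̂ = ε̂ + Ĉ ⊆ 𝔽¹⁰`. -/
def SigmaHat : Set (Fin 10 → ZMod 2) := {x | ∃ c ∈ Chat, x = epsHat + c}

/-- The truncation `τ₃ : 𝔽¹⁰ → 𝔽³` onto the first three coordinates. -/
def tau3 (v : Fin 10 → ZMod 2) : Fin 3 → ZMod 2 :=
  fun j => v (Fin.castLE (by omega) j)

/-- The `i`-th length-10 block of a vector in `𝔽^{10q}` (blocks are consecutive). -/
def block (q : ℕ) (v : Fin (10 * q) → ZMod 2) (i : Fin q) : Fin 10 → ZMod 2 :=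
  fun s => v ⟨10 * (i : ℕ) + (s : ℕ), by have := i.isLt; have := s.isLt; omega⟩

/-- The `10q × 3q` block-diagonal matrix `M_τ` with `q` diagonal blocks, each being the
`3 × 3` identity on top of the `7 × 3` zero matrix; it represents the blockwise
truncation via `τ(v) = v · M_τ`. -/
def Mtau (q : ℕ) : Matrix (Fin (10 * q)) (Fin (3 * q)) (ZMod 2) :=
  fun r c =>
    if (r : ℕ) % 10 < 3 ∧ (r : ℕ) / 10 = (c : ℕ) / 3 ∧ (r : ℕ) % 10 = (c : ℕ) % 3
    then 1 else 0

/-- The element of `SigmaHat` with message `(a, b, c)`. -/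
def codeword (a b c : ZMod 2) : Fin 10 → ZMod 2 :=
  epsHat + (a • g1 + b • g2 + c • g3)

theorem mem_SigmaHat_iff (x : Fin 10 → ZMod 2) :
    x ∈ SigmaHat ↔ ∃ a b c, x = codeword a b c := by
  constructor
  · rintro ⟨_, ⟨a, b, c, rfl⟩, rfl⟩
    exact ⟨a, b, c, rfl⟩
  · rintro ⟨a, b, c, rfl⟩
    exact ⟨_, ⟨a, b, c, rfl⟩, rfl⟩

theorem codeword_zero (a b c : ZMod 2) : codeword a b c 0 = a := by
  simp [codeword, epsHat, g1, g2, g3]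

theorem codeword_one (a b c : ZMod 2) : codeword a b c 1 = b := by
  simp [codeword, epsHat, g1, g2, g3]

theorem codeword_two (a b c : ZMod 2) : codeword a b c 2 = c := by
  simp [codeword, epsHat, g1, g2, g3]

theorem three_le_wt_codeword : ∀ a b c : ZMod 2, 3 ≤ hammingWt (codeword a b c) := by
  unfold hammingWt
  decide

theorem wt_codeword_le_three_iff :
    ∀ a b c : ZMod 2, hammingWt (codeword a b c) ≤ 3 ↔ a * b + c = 0 := by
  unfold hammingWt
  decide

theorem hammingWt_eq_sum_block (q : ℕ) (v : Fin (10 * q) → ZMod 2) :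
    hammingWt v = ∑ i, hammingWt (block q v i) := by
  simp only [hammingWt, Finset.card_filter]
  rw [← Fintype.sum_prod_type' (f := fun (i : Fin q) (s : Fin 10) =>
    if block q v i s ≠ 0 then 1 else 0)]
  symm
  refine Fintype.sum_equiv (finProdFinEquiv.trans (finCongr (Nat.mul_comm q 10))) _ _ ?_
  rintro ⟨i, s⟩
  have h : (finProdFinEquiv.trans (finCongr (Nat.mul_comm q 10))) (i, s)
      = ⟨10 * (i : ℕ) + (s : ℕ), by have := i.isLt; have := s.isLt; omega⟩ := by
    ext
    simp [finProdFinEquiv, Nat.add_comm]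
  rw [h]
  rfl

/-- Multiplication by `Mtau` reads off, in block `i`, the coordinates `s < 3`. -/
theorem vecMul_Mtau_apply (q : ℕ) (v : Fin (10 * q) → ZMod 2) (i : Fin q) (s : ℕ) (hs : s < 3)
    (h : 3 * (i : ℕ) + s < 3 * q) :
    Matrix.vecMul v (Mtau q) ⟨3 * (i : ℕ) + s, h⟩ = block q v i ⟨s, by omega⟩ := by
  have hi := i.isLt
  simp only [Matrix.vecMul, dotProduct, Mtau]
  rw [Finset.sum_eq_single (⟨10 * (i : ℕ) + s, by omega⟩ : Fin (10 * q))]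
  · rw [if_pos (by refine ⟨?_, ?_, ?_⟩ <;> dsimp only <;> omega), mul_one]
    rfl
  · intro r _ hr
    have hr' : (r : ℕ) ≠ 10 * (i : ℕ) + s := fun e => hr (Fin.ext e)
    rw [if_neg (by omega), mul_zero]
  · simp

/-- (Paper's Proposition.)  Let `W̃` be the set of vectors of
`𝔽^{10q}` whose `q` consecutive blocks lie in `Σ̂ = ε̂ + Ĉ` and whose Hamming weight is
at most `3q`.  Then the image of `W̃` under the blockwise truncation
`τ(v) = v · M_τ : 𝔽^{10q} → 𝔽^{3q}` is exactly the set of common zeroes of the `q`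
pairwise variable-disjoint quadratic equations `x y + z = 0`, i.e.
`{w ∈ 𝔽^{3q} | w_{3(i-1)+1}·w_{3(i-1)+2} + w_{3(i-1)+3} = 0 for all i = 1,…,q}`. -/
theorem product_witnesses_truncate_to_variety (q : ℕ) (hq : 1 ≤ q) :
    (fun v => Matrix.vecMul v (Mtau q)) ''
        {v : Fin (10 * q) → ZMod 2 |
          (∀ i, block q v i ∈ SigmaHat) ∧ hammingWt v ≤ 3 * q}
      = {w : Fin (3 * q) → ZMod 2 |
          ∀ i : Fin q,
            w ⟨3 * (i : ℕ), by have := i.isLt; omega⟩ *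
              w ⟨3 * (i : ℕ) + 1, by have := i.isLt; omega⟩ +
              w ⟨3 * (i : ℕ) + 2, by have := i.isLt; omega⟩ = 0} := by
  ext w
  simp only [Set.mem_image, Set.mem_ofPred_eq]
  constructor
  · rintro ⟨v, ⟨hv, hwt⟩, rfl⟩ i
    choose a b c habc using fun i => (mem_SigmaHat_iff _).1 (hv i)
    have hge : ∀ j ∈ Finset.univ, 3 ≤ hammingWt (block q v j) := fun j _ => by
      rw [habc j]
      exact three_le_wt_codeword _ _ _
    -- The lower bound `3 q` is attained, so it is attained in every block.
    have heq : ∑ _j : Fin q, 3 = ∑ j, hammingWt (block q v j) := by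
      refine le_antisymm (Finset.sum_le_sum hge) ?_
      rw [← hammingWt_eq_sum_block]
      simpa [Nat.mul_comm] using hwt
    have hi := ((Finset.sum_eq_sum_iff_of_le hge).1 heq i (Finset.mem_univ i)).ge
    rw [habc i, wt_codeword_le_three_iff] at hi
    have h0 := vecMul_Mtau_apply q v i 0 (by omega) (by omega)
    have h1 := vecMul_Mtau_apply q v i 1 (by omega) (by omega)
    have h2 := vecMul_Mtau_apply q v i 2 (by omega) (by omega)
    rw [habc i] at h0 h1 h2
    have e0 := h0.trans (codeword_zero _ _ _)
    have e1 := h1.trans (codeword_one _ _ _)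
    have e2 := h2.trans (codeword_two _ _ _)
    simp only [Nat.add_zero] at e0
    rw [e0, e1, e2]
    exact hi
  · intro hw
    let B : Fin q → Fin 10 → ZMod 2 := fun i =>
      codeword (w ⟨3 * (i : ℕ), by omega⟩) (w ⟨3 * (i : ℕ) + 1, by omega⟩)
        (w ⟨3 * (i : ℕ) + 2, by omega⟩)
    let v : Fin (10 * q) → ZMod 2 := fun r =>
      B ⟨(r : ℕ) / 10, by omega⟩ ⟨(r : ℕ) % 10, by omega⟩
    have hB : ∀ i, block q v i = B i := by
      intro i
      funext s
      have hs := s.isLt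
      change B _ _ = B i s
      congr 1 <;> ext <;> dsimp only <;> omega
    refine ⟨v, ⟨fun i => ?_, ?_⟩, ?_⟩
    · rw [hB i]
      exact (mem_SigmaHat_iff _).2 ⟨_, _, _, rfl⟩
    · rw [hammingWt_eq_sum_block]
      calc ∑ i, hammingWt (block q v i) ≤ ∑ _i : Fin q, 3 :=
            Finset.sum_le_sum fun i _ => by
              rw [hB i]
              exact (wt_codeword_le_three_iff _ _ _).2 (hw i)
        _ = 3 * q := by simp [Nat.mul_comm]
    · funext c
      obtain ⟨i, s, hs, h, rfl⟩ : ∃ (i : Fin q) (s : ℕ) (_ : s < 3) (h : 3 * (i : ℕ) + s < 3 * q),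
          c = ⟨3 * (i : ℕ) + s, h⟩ :=
        ⟨⟨(c : ℕ) / 3, by omega⟩, (c : ℕ) % 3, by omega, by dsimp only; omega,
          by ext; dsimp only; omega⟩
      refine (vecMul_Mtau_apply q v i s hs h).trans ?_
      rw [hB i]
      interval_cases s
      · exact codeword_zero _ _ _
      · exact codeword_one _ _ _
      · exact codeword_two _ _ _
end
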